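/- arXiv:1212.4203 — 4 statements merged into one kernel-verified Lean document; each statement's English description precedes it below -/
import Mathlib

section
/- In dimensions d = 1 and d = 2 the conclusion of the fractional Poincaré-type lemma fails: for d ∈ {1, 2} there exists a constant C₁ > 0 such that for every ε₀ > 0 there is a t > 0 for which the Gaussian f_t(x) = e^{−t|x|²} satisfies: 0 ≤ f_t(x) ≤ f_t(0) = 1 for all x, f_t ∈ L²(ℝ^d), ∫_{ℝ^d} (|ξ|²/(1+|ξ|²)) |𝓕f_t(ξ)|² dξ ≤ C₁², and yet ∫_{ℝ^d} K_d(y)(1 − f_t(y)) dy < ε₀. -/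
open MeasureTheory Real Set
open scoped FourierTransform

/-- The Bessel kernel `K_d`, convolution kernel of `(1-Δ)⁻¹` on `ℝ^d`. -/
noncomputable def besselKernel (d : ℕ) (x : EuclideanSpace ℝ (Fin d)) : ℝ :=
  ∫ s in Set.Ioi (0:ℝ),
    Real.exp (-s) * (4 * Real.pi * s) ^ (-(d:ℝ)/2) * Real.exp (-‖x‖^2 / (4*s))


open Filter Topology in
lemma aux_gauss_integrable (d : ℕ) {b : ℝ} (hb : 0 < b) :
    Integrable (fun x : EuclideanSpace ℝ (Fin d) => Real.exp (-b * ‖x‖^2)) := by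
  by_contra h
  have h1 := GaussianFourier.integral_rexp_neg_mul_sq_norm (V := EuclideanSpace ℝ (Fin d)) hb
  rw [integral_undef h] at h1
  have : 0 < (π / b) ^ (Module.finrank ℝ (EuclideanSpace ℝ (Fin d)) / 2 : ℝ) := by positivity
  linarith

lemma aux_gauss_integral (d : ℕ) {b : ℝ} (hb : 0 < b) :
    ∫ x : EuclideanSpace ℝ (Fin d), Real.exp (-b * ‖x‖^2) = (π / b) ^ ((d:ℝ) / 2) := by
  rw [GaussianFourier.integral_rexp_neg_mul_sq_norm hb, finrank_euclideanSpace_fin]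

lemma aux_bessel_integrable (d : ℕ) : Integrable (besselKernel d) := by
  let F : ℝ × EuclideanSpace ℝ (Fin d) → ℝ := fun p =>
    Real.exp (-p.1) * (4 * Real.pi * p.1) ^ (-(d:ℝ)/2) * Real.exp (-‖p.2‖^2 / (4*p.1))
  have hFm : Measurable F := by
    simp only [F]
    fun_prop
  have key : Integrable F ((volume.restrict (Set.Ioi (0:ℝ))).prod volume) := by
    rw [integrable_prod_iff hFm.aestronglyMeasurable]
    constructor
    · refine (ae_restrict_iff' measurableSet_Ioi).2 (Filter.Eventually.of_forall fun s hs => ?_)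
      have hs : 0 < s := hs
      have h := (aux_gauss_integrable d (b := 1 / (4 * s)) (by positivity)).const_mul
        (Real.exp (-s) * (4 * Real.pi * s) ^ (-(d:ℝ)/2))
      refine h.congr (Filter.Eventually.of_forall fun x => ?_)
      simp only [F]
      congr 2
      ring
    · have h0 : IntegrableOn (fun s : ℝ => Real.exp (-s)) (Set.Ioi 0) := integrableOn_exp_neg_Ioi 0
      refine Integrable.congr h0 ?_
      refine (ae_restrict_iff' measurableSet_Ioi).2 (Filter.Eventually.of_forall fun s hs => ?_)
      have hs : 0 < s := hs
      have hn : ∀ x : EuclideanSpace ℝ (Fin d), ‖F (s, x)‖ =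
          (Real.exp (-s) * (4 * Real.pi * s) ^ (-(d:ℝ)/2)) *
            Real.exp (-(1 / (4 * s)) * ‖x‖^2) := by
        intro x
        rw [Real.norm_of_nonneg (by simp only [F]; positivity)]
        simp only [F]
        congr 2
        ring
      simp only [hn]
      rw [integral_const_mul, aux_gauss_integral d (by positivity)]
      have e : π / (1 / (4 * s)) = 4 * π * s := by field_simp
      rw [e, mul_assoc, ← Real.rpow_add (by positivity)]
      have : -(d:ℝ)/2 + d/2 = 0 := by ring
      rw [this]; simp
  exact key.integral_prod_right

lemma aux_fourier_norm (d : ℕ) {t : ℝ} (ht : 0 < t) (ξ : EuclideanSpace ℝ (Fin d)) :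
    ‖𝓕 (fun x : EuclideanSpace ℝ (Fin d) => (Real.exp (-t * ‖x‖^2) : ℂ)) ξ‖ =
      (π / t) ^ ((d:ℝ) / 2) * Real.exp (-π^2 * ‖ξ‖^2 / t) := by
  have h := fourier_gaussian_innerProductSpace (b := (t:ℂ)) (by simpa using ht) ξ
  have e : (fun x : EuclideanSpace ℝ (Fin d) => (Real.exp (-t * ‖x‖^2) : ℂ)) =
      fun x => Complex.exp (-(t:ℂ) * (‖x‖:ℂ)^2) := by
    funext x
    push_cast
    rfl
  rw [e, h, finrank_euclideanSpace_fin]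
  have e2 : ((π:ℂ) / t) ^ ((d:ℂ)/2) * Complex.exp (-(π:ℂ)^2 * (‖ξ‖:ℂ)^2 / t) =
      (((π / t) ^ ((d:ℝ) / 2) * Real.exp (-π^2 * ‖ξ‖^2 / t) : ℝ) : ℂ) := by
    push_cast
    rw [Complex.ofReal_cpow (by positivity)]
    push_cast
    rfl
  rw [e2, Complex.norm_real, Real.norm_of_nonneg (by positivity)]

lemma aux_energy (d : ℕ) (hd : d = 1 ∨ d = 2) {t : ℝ} (ht : 0 < t) (ht1 : t ≤ 1) :
    (∫⁻ ξ : EuclideanSpace ℝ (Fin d),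
              ENNReal.ofReal ((‖ξ‖^2 / (1 + ‖ξ‖^2)) *
                ‖𝓕 (fun x : EuclideanSpace ℝ (Fin d) =>
                    (Real.exp (-t * ‖x‖^2) : ℂ)) ξ‖^2))
            ≤ ENNReal.ofReal ((1:ℝ)^2) := by
  have hb : 0 < π^2 / t := by positivity
  have hpt : ∀ ξ : EuclideanSpace ℝ (Fin d), (‖ξ‖^2 / (1 + ‖ξ‖^2)) *
                ‖𝓕 (fun x : EuclideanSpace ℝ (Fin d) =>
                    (Real.exp (-t * ‖x‖^2) : ℂ)) ξ‖^2 ≤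
      (((π / t) ^ ((d:ℝ) / 2))^2 * (t / π^2)) * Real.exp (-(π^2 / t) * ‖ξ‖^2) := by
    intro ξ
    rw [aux_fourier_norm d ht]
    have h1 : ‖ξ‖^2 / (1 + ‖ξ‖^2) ≤ ‖ξ‖^2 := div_le_self (by positivity) (by nlinarith [norm_nonneg ξ])
    set u : ℝ := (π^2 / t) * ‖ξ‖^2 with hu
    have hE : -π^2 * ‖ξ‖^2 / t = -u := by rw [hu]; ring
    have hE2 : -(π^2 / t) * ‖ξ‖^2 = -u := by rw [hu]; ring
    have hx : ‖ξ‖^2 = (t / π^2) * u := by rw [hu]; field_simp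
    rw [hE, hE2]
    have h2 : u * Real.exp (-u) ≤ 1 := by
      have := Real.add_one_le_exp u
      rw [Real.exp_neg, ← div_eq_mul_inv, div_le_one (Real.exp_pos _)]
      linarith
    set A := (π / t) ^ ((d:ℝ) / 2)
    calc ‖ξ‖^2 / (1 + ‖ξ‖^2) * (A * Real.exp (-u))^2
        ≤ ‖ξ‖^2 * (A * Real.exp (-u))^2 := by gcongr
      _ = (A^2 * (t / π^2)) * Real.exp (-u) * (u * Real.exp (-u)) := by rw [hx]; ring
      _ ≤ (A^2 * (t / π^2)) * Real.exp (-u) * 1 := by gcongr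
      _ = _ := by ring
  calc _ ≤ ∫⁻ ξ : EuclideanSpace ℝ (Fin d), ENNReal.ofReal
        ((((π / t) ^ ((d:ℝ) / 2))^2 * (t / π^2)) * Real.exp (-(π^2 / t) * ‖ξ‖^2)) :=
        lintegral_mono fun ξ => ENNReal.ofReal_le_ofReal (hpt ξ)
    _ = ENNReal.ofReal (∫ ξ : EuclideanSpace ℝ (Fin d),
        (((π / t) ^ ((d:ℝ) / 2))^2 * (t / π^2)) * Real.exp (-(π^2 / t) * ‖ξ‖^2)) := by
        rw [ofReal_integral_eq_lintegral_ofReal]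
        · exact (aux_gauss_integrable d hb).const_mul _
        · exact Filter.Eventually.of_forall fun ξ => by positivity
    _ ≤ _ := by
        apply ENNReal.ofReal_le_ofReal
        rw [integral_const_mul, aux_gauss_integral d hb]
        have e : π / (π^2 / t) = (π / t)⁻¹ := by field_simp
        rw [e, Real.inv_rpow (by positivity)]
        have hge : 1 ≤ π / t := by
          rw [le_div_iff₀ ht]; linarith [Real.pi_gt_three]
        have hA : (π / t) ^ ((d:ℝ) / 2) ≤ π / t := by
          conv_rhs => rw [← Real.rpow_one (π / t)]
          apply Real.rpow_le_rpow_of_exponent_le hge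
          rcases hd with rfl | rfl <;> norm_num
        have hA0 : 0 < (π / t) ^ ((d:ℝ) / 2) := by positivity
        set A := (π / t) ^ ((d:ℝ) / 2)
        calc A^2 * (t / π^2) * A⁻¹ = A * (t / π^2) := by field_simp
          _ ≤ (π / t) * (t / π^2) := by gcongr
          _ = 1 / π := by field_simp
          _ ≤ 1^2 := by
            rw [div_le_iff₀ Real.pi_pos]; linarith [Real.pi_gt_three]

open Filter Topology in
lemma aux_tendsto (d : ℕ) : Tendsto (fun t : ℝ =>
    ∫ y, besselKernel d y * (1 - Real.exp (-t * ‖y‖^2))) (𝓝[>] 0) (𝓝 0) := by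
  have h := tendsto_integral_filter_of_dominated_convergence (μ := volume) (l := 𝓝[>] (0:ℝ))
    (F := fun (t : ℝ) (y : EuclideanSpace ℝ (Fin d)) =>
      besselKernel d y * (1 - Real.exp (-t * ‖y‖^2))) (f := fun _ => 0)
    (fun y => ‖besselKernel d y‖) ?_ ?_ (aux_bessel_integrable d).norm ?_
  · simpa using h
  · refine Eventually.of_forall fun t => ?_
    refine (aux_bessel_integrable d).aestronglyMeasurable.mul ?_
    exact Continuous.aestronglyMeasurable (by fun_prop)
  · filter_upwards [self_mem_nhdsWithin] with t ht
    have ht : 0 < t := ht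
    refine Eventually.of_forall fun y => ?_
    rw [norm_mul]
    refine mul_le_of_le_one_right (norm_nonneg _) ?_
    have h1 : Real.exp (-t * ‖y‖^2) ≤ 1 := by
      rw [Real.exp_le_one_iff]; nlinarith [sq_nonneg ‖y‖]
    have h2 := Real.exp_pos (-t * ‖y‖^2)
    rw [Real.norm_of_nonneg (by linarith)]
    linarith
  · refine Eventually.of_forall fun y => ?_
    have hc : Continuous fun t : ℝ => besselKernel d y * (1 - Real.exp (-t * ‖y‖^2)) := by
      fun_prop
    have := hc.tendsto 0
    simp only [neg_zero, zero_mul, Real.exp_zero, sub_self, mul_zero] at this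
    exact this.mono_left nhdsWithin_le_nhds

/-- in dimensions `d = 1, 2` the fractional Poincaré-type lemma fails,
as witnessed by the Gaussians `f_t(x) = e^{-t|x|²}` as `t → 0⁺` (Remark after
Lemma `lem100a`). -/
theorem stmt_2 (d : ℕ) (hd : d = 1 ∨ d = 2) :
    ∃ C₁ : ℝ, 0 < C₁ ∧
      ∀ ε₀ : ℝ, 0 < ε₀ →
        ∃ t : ℝ, 0 < t ∧
          (∀ x : EuclideanSpace ℝ (Fin d),
            0 ≤ Real.exp (-t * ‖x‖^2) ∧ Real.exp (-t * ‖x‖^2) ≤ 1) ∧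
          Real.exp (-t * ‖(0 : EuclideanSpace ℝ (Fin d))‖^2) = 1 ∧
          MemLp (fun x : EuclideanSpace ℝ (Fin d) => Real.exp (-t * ‖x‖^2)) 2 volume ∧
          (∫⁻ ξ : EuclideanSpace ℝ (Fin d),
              ENNReal.ofReal ((‖ξ‖^2 / (1 + ‖ξ‖^2)) *
                ‖𝓕 (fun x : EuclideanSpace ℝ (Fin d) =>
                    (Real.exp (-t * ‖x‖^2) : ℂ)) ξ‖^2))
            ≤ ENNReal.ofReal (C₁^2) ∧
          (∫ y, besselKernel d y * (1 - Real.exp (-t * ‖y‖^2))) < ε₀ := by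
  refine ⟨1, one_pos, fun ε₀ hε => ?_⟩
  have h1 := (aux_tendsto d).eventually (gt_mem_nhds hε)
  have h2 : ∀ᶠ t : ℝ in nhdsWithin 0 (Set.Ioi 0), t ∈ Set.Ioc (0:ℝ) 1 :=
    Ioc_mem_nhdsGT one_pos
  obtain ⟨t, hlt, ht, ht1⟩ := (h1.and h2).exists
  refine ⟨t, ht, fun x => ⟨(Real.exp_pos _).le, ?_⟩, by simp, ?_, aux_energy d hd ht ht1, hlt⟩
  · rw [Real.exp_le_one_iff]; nlinarith [sq_nonneg ‖x‖]
  · rw [memLp_two_iff_integrable_sq (Continuous.aestronglyMeasurable (by fun_prop))]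
    refine (aux_gauss_integrable d (b := 2 * t) (by positivity)).congr
      (Filter.Eventually.of_forall fun x => ?_)
    simp only [sq (Real.exp _), ← Real.exp_add]
    congr 1
    ring
end

section
/- Let p ∈ (1, ∞) and let p′ = p/(p−1) be its Hölder conjugate. There exists a constant C > 0, depending only on p, such that for every measurable function f : ℝ³ → ℝ with f ≥ 0, f ∈ L^p(ℝ³) ∩ L^∞(ℝ³), and every R > 1, one has ∫_{ℝ³} (e^{−|y|}/(4π|y|)) f(y) dy ≤ (1 − (R+1)e^{−R}) ‖f‖_{L^∞(ℝ³)} + C · R^{(2−p′)/p′} e^{−R} ‖f‖_{L^p(ℝ³)}. -/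
open MeasureTheory Real Set

/-- Radial profile of the Bessel kernel. -/
noncomputable def besselK (r : ℝ) : ℝ := Real.exp (-r) / (4 * Real.pi * r)

theorem besselK_measurable : Measurable besselK := by
  unfold besselK
  fun_prop

theorem besselK_nonneg {r : ℝ} (hr : 0 ≤ r) : 0 ≤ besselK r := by
  unfold besselK
  positivity

theorem real_ball_three :
    (volume : Measure (EuclideanSpace ℝ (Fin 3))).real (Metric.ball 0 1) = π * 4 / 3 := by
  rw [Measure.real, EuclideanSpace.volume_ball_fin_three]
  simp
  positivity

theorem integral_radial_three (g : ℝ → ℝ) :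
    ∫ y : EuclideanSpace ℝ (Fin 3), g ‖y‖ = 4 * π * ∫ r in Ioi (0 : ℝ), r ^ 2 * g r := by
  rw [integral_fun_norm_addHaar volume g, real_ball_three]
  simp
  ring

theorem integrable_radial_three (g : ℝ → ℝ) :
    Integrable (fun y : EuclideanSpace ℝ (Fin 3) => g ‖y‖) ↔
      IntegrableOn (fun r => r ^ 2 * g r) (Ioi (0 : ℝ)) := by
  rw [integrable_fun_norm_addHaar volume (f := g)]
  simp

theorem near_congr (R : ℝ) : EqOn (fun r : ℝ => r ^ 2 * (Iio R).indicator besselK r)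
    ((Iio R).indicator (fun r => (4 * π)⁻¹ * (r * Real.exp (-r)))) (Ioi 0) := by
  intro r hr
  have hr' : r ≠ 0 := (ne_of_gt hr)
  by_cases h : r < R
  · simp only [indicator, mem_Iio, h, if_true, besselK]
    field_simp
  · simp [indicator, h]

theorem near_integrable (R : ℝ) :
    Integrable (fun y : EuclideanSpace ℝ (Fin 3) => (Iio R).indicator besselK ‖y‖) := by
  rw [integrable_radial_three, integrableOn_congr_fun (near_congr R) measurableSet_Ioi,
    IntegrableOn, integrable_indicator_iff measurableSet_Iio, IntegrableOn,
    Measure.restrict_restrict measurableSet_Iio, ← IntegrableOn]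
  refine IntegrableOn.mono_set (t := Icc 0 R) ?_ ?_
  · exact (Continuous.continuousOn (by fun_prop)).integrableOn_Icc
  · intro x hx
    exact ⟨le_of_lt hx.2, le_of_lt hx.1⟩

theorem near_integral {R : ℝ} (hR : 0 ≤ R) :
    ∫ y : EuclideanSpace ℝ (Fin 3), (Iio R).indicator besselK ‖y‖
      = 1 - (R + 1) * Real.exp (-R) := by
  rw [integral_radial_three, setIntegral_congr_fun measurableSet_Ioi (near_congr R),
    setIntegral_indicator measurableSet_Iio, Ioi_inter_Iio, ← integral_Ioc_eq_integral_Ioo,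
    ← intervalIntegral.integral_of_le hR, intervalIntegral.integral_const_mul]
  have : ∫ x in (0 : ℝ)..R, x * Real.exp (-x) =
      -(R + 1) * Real.exp (-R) - (-(0 + 1) * Real.exp (-0)) := by
    refine intervalIntegral.integral_eq_sub_of_hasDerivAt
      (f := fun x => -(x + 1) * Real.exp (-x)) (fun x _ => ?_) ?_
    · have h1 : HasDerivAt (fun x : ℝ => -(x + 1)) (-1) x := ((hasDerivAt_id x).add_const 1).neg
      have h2 : HasDerivAt (fun x : ℝ => Real.exp (-x)) (Real.exp (-x) * -1) x :=
        (hasDerivAt_neg x).exp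
      refine (h1.mul h2).congr_deriv ?_
      ring
    · exact (Continuous.intervalIntegrable (by fun_prop) _ _)
  rw [this]
  have := Real.pi_pos
  simp
  field_simp
  ring

theorem far_pointwise {q R r : ℝ} (hq : 1 < q) (hR : 1 < R) (hr : R ≤ r) :
    r ^ 2 * besselK r ^ q ≤
      ((4 * π) ^ (-q) * R ^ (2 - q) * Real.exp (-q * R) * 2 * Real.exp (R / 2)) *
        Real.exp ((-1 / 2) * r) := by
  have hr0 : 0 < r := by linarith
  have hR0 : 0 < R := by linarith
  have e1 : r ^ 2 * besselK r ^ q = (4 * π) ^ (-q) * (r ^ (2 - q) * Real.exp (-q * r)) := by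
    unfold besselK
    rw [Real.div_rpow (by positivity) (by positivity),
      Real.mul_rpow (by positivity) (by positivity), ← Real.exp_mul, Real.rpow_sub hr0,
      Real.rpow_neg (by positivity), Real.rpow_two]
    rw [show -r * q = -q * r by ring]
    field_simp
  have e2 : r ^ (2 - q) ≤ R ^ (2 - q) * (2 * Real.exp ((r - R) / 2)) := by
    have h1 : r ^ (2 - q) = R ^ (2 - q) * (r / R) ^ (2 - q) := by
      rw [← Real.mul_rpow (by positivity) (by positivity)]
      congr 1
      field_simp
    rw [h1]
    have h2 : 1 ≤ r / R := by rwa [one_le_div hR0]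
    have h3 : (r / R) ^ (2 - q) ≤ r / R := by
      have := Real.rpow_le_rpow_of_exponent_le h2 (show 2 - q ≤ 1 by linarith)
      rwa [Real.rpow_one] at this
    have h4 : r / R ≤ 1 + (r - R) := by
      rw [div_le_iff₀ hR0]
      nlinarith
    have h5 := Real.add_one_le_exp ((r - R) / 2)
    have h6 : (r / R) ^ (2 - q) ≤ 2 * Real.exp ((r - R) / 2) := by linarith
    gcongr
  have e3 : Real.exp (-q * r) ≤ Real.exp (-q * R) * Real.exp (-(r - R)) := by
    rw [← Real.exp_add]
    apply Real.exp_le_exp.mpr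
    nlinarith
  rw [e1]
  calc (4 * π) ^ (-q) * (r ^ (2 - q) * Real.exp (-q * r))
      ≤ (4 * π) ^ (-q) * ((R ^ (2 - q) * (2 * Real.exp ((r - R) / 2))) *
          (Real.exp (-q * R) * Real.exp (-(r - R)))) := by gcongr
    _ = (4 * π) ^ (-q) * R ^ (2 - q) * Real.exp (-q * R) * 2 *
          (Real.exp ((r - R) / 2) * Real.exp (-(r - R))) := by ring
    _ = (4 * π) ^ (-q) * R ^ (2 - q) * Real.exp (-q * R) * 2 *
          (Real.exp (R / 2) * Real.exp ((-1 / 2) * r)) := by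
        rw [← Real.exp_add, ← Real.exp_add]
        congr 2
        ring
    _ = _ := by ring

theorem far_congr {q R : ℝ} (hq : 1 < q) :
    (fun r : ℝ => r ^ 2 * ((Ici R).indicator besselK r) ^ q)
    = ((Ici R).indicator (fun r => r ^ 2 * besselK r ^ q)) := by
  ext r
  by_cases h : R ≤ r
  · simp [indicator, h]
  · simp [indicator, h, Real.zero_rpow (by linarith : q ≠ 0)]

theorem Ioi_inter_Ici' {R : ℝ} (hR : 1 < R) : Ici R ∩ Ioi (0 : ℝ) = Ici R := by
  apply inter_eq_left.mpr
  intro x hx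
  have : R ≤ x := hx
  exact mem_Ioi.mpr (by linarith)

theorem far_integrableOn {q R : ℝ} (hq : 1 < q) (hR : 1 < R) :
    IntegrableOn (fun r => r ^ 2 * besselK r ^ q) (Ioi R) := by
  refine Integrable.mono' ((integrableOn_exp_mul_Ioi (a := -1 / 2) (by norm_num) R).const_mul
    ((4 * π) ^ (-q) * R ^ (2 - q) * Real.exp (-q * R) * 2 * Real.exp (R / 2))) ?_ ?_
  · exact (Measurable.mul (by fun_prop) (besselK_measurable.pow_const q)).aestronglyMeasurable
  · refine (ae_restrict_mem measurableSet_Ioi).mono fun r hr => ?_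
    have hr' : R < r := hr
    rw [Real.norm_of_nonneg]
    · exact far_pointwise hq hR hr'.le
    · have := besselK_nonneg (r := r) (by linarith)
      positivity

theorem far_integrable {q R : ℝ} (hq : 1 < q) (hR : 1 < R) :
    Integrable (fun y : EuclideanSpace ℝ (Fin 3) => ((Ici R).indicator besselK ‖y‖) ^ q) := by
  rw [integrable_radial_three (fun r => ((Ici R).indicator besselK r) ^ q), far_congr hq,
    IntegrableOn, integrable_indicator_iff measurableSet_Ici, IntegrableOn,
    Measure.restrict_restrict measurableSet_Ici, ← IntegrableOn, Ioi_inter_Ici' hR,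
    integrableOn_Ici_iff_integrableOn_Ioi]
  exact far_integrableOn hq hR

theorem far_integral {q R : ℝ} (hq : 1 < q) (hR : 1 < R) :
    ∫ y : EuclideanSpace ℝ (Fin 3), ((Ici R).indicator besselK ‖y‖) ^ q
      ≤ (16 * π * (4 * π) ^ (-q)) * (R ^ (2 - q) * Real.exp (-q * R)) := by
  rw [integral_radial_three (fun r => ((Ici R).indicator besselK r) ^ q), far_congr hq,
    setIntegral_indicator measurableSet_Ici, inter_comm, Ioi_inter_Ici' hR,
    integral_Ici_eq_integral_Ioi]
  have h1 := setIntegral_mono_on (far_integrableOn hq hR)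
    ((integrableOn_exp_mul_Ioi (a := -1 / 2) (by norm_num) R).const_mul
    ((4 * π) ^ (-q) * R ^ (2 - q) * Real.exp (-q * R) * 2 * Real.exp (R / 2)))
    measurableSet_Ioi (fun r hr => far_pointwise hq hR (le_of_lt hr))
  rw [integral_const_mul, integral_exp_mul_Ioi (by norm_num)] at h1
  have h2 : Real.exp (R / 2) * Real.exp (-1 / 2 * R) = 1 := by
    rw [← Real.exp_add]
    simp
    ring
  have h3 : (4 * π) ^ (-q) * R ^ (2 - q) * Real.exp (-q * R) * 2 * Real.exp (R / 2) *
      (-Real.exp (-1 / 2 * R) / (-1 / 2)) =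
      4 * (4 * π) ^ (-q) * R ^ (2 - q) * Real.exp (-q * R) := by
    calc _ = 4 * (4 * π) ^ (-q) * R ^ (2 - q) * Real.exp (-q * R) *
            (Real.exp (R / 2) * Real.exp (-1 / 2 * R)) := by ring
      _ = _ := by rw [h2, mul_one]
  rw [h3] at h1
  calc _ ≤ 4 * π * (4 * (4 * π) ^ (-q) * R ^ (2 - q) * Real.exp (-q * R)) := by gcongr
    _ = _ := by ring

/-- the quantitative 3D Bessel-kernel splitting estimate. -/
theorem stmt_7 (p : ℝ) (hp : 1 < p) :
    ∃ C : ℝ, 0 < C ∧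
      ∀ f : EuclideanSpace ℝ (Fin 3) → ℝ, Measurable f →
        (∀ x, 0 ≤ f x) →
        MemLp f (ENNReal.ofReal p) volume →
        MemLp f ⊤ volume →
        ∀ R : ℝ, 1 < R →
          (∫ y : EuclideanSpace ℝ (Fin 3), (Real.exp (-‖y‖) / (4 * Real.pi * ‖y‖)) * f y)
            ≤ (1 - (R + 1) * Real.exp (-R)) * (eLpNorm f ⊤ volume).toReal
              + C * R ^ ((2 - p/(p-1)) / (p/(p-1))) * Real.exp (-R)
                  * (eLpNorm f (ENNReal.ofReal p) volume).toReal := by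
  have hpq : p.HolderConjugate (p / (p - 1)) := Real.HolderConjugate.conjExponent hp
  generalize p / (p - 1) = q at hpq ⊢
  have hq : 1 < q := hpq.symm.lt
  have hq0 : 0 < q := by linarith
  have hp0 : 0 < p := by linarith
  refine ⟨(16 * π * (4 * π) ^ (-q)) ^ (1 / q), by positivity, ?_⟩
  intro f hf hf0 hfp hfi R hR
  have hR0 : 0 < R := by linarith
  set K1 : EuclideanSpace ℝ (Fin 3) → ℝ := fun y => (Iio R).indicator besselK ‖y‖ with hK1
  set K2 : EuclideanSpace ℝ (Fin 3) → ℝ := fun y => (Ici R).indicator besselK ‖y‖ with hK2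
  set M := (eLpNorm f ⊤ volume).toReal with hM
  have hfM : ∀ᵐ y, f y ≤ M := by
    have h := ae_le_eLpNormEssSup (f := f) (μ := volume)
    filter_upwards [h] with y hy
    rw [← eLpNorm_exponent_top] at hy
    have := ENNReal.toReal_mono hfi.eLpNorm_ne_top hy
    rw [toReal_enorm, Real.norm_of_nonneg (hf0 y)] at this
    exact this
  have hK1n : ∀ y, 0 ≤ K1 y := fun y =>
    indicator_apply_nonneg fun _ => besselK_nonneg (norm_nonneg y)
  have hK2n : ∀ y, 0 ≤ K2 y := fun y =>
    indicator_apply_nonneg fun _ => besselK_nonneg (norm_nonneg y)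
  have hK1i : Integrable K1 := near_integrable R
  have hK2m : Measurable K2 := (besselK_measurable.indicator measurableSet_Ici).comp measurable_norm
  have hK2L : MemLp K2 (ENNReal.ofReal q) := by
    rw [← integrable_norm_rpow_iff hK2m.aestronglyMeasurable (by simpa using hq0) (by simp),
      ENNReal.toReal_ofReal hq0.le]
    simp_rw [Real.norm_of_nonneg (hK2n _)]
    exact far_integrable hq hR
  have hi1 : Integrable (fun y => K1 y * f y) := by
    refine Integrable.mono' (hK1i.mul_const M)
      (hK1i.aestronglyMeasurable.mul hf.aestronglyMeasurable) ?_
    filter_upwards [hfM] with y hy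
    rw [Real.norm_of_nonneg (mul_nonneg (hK1n y) (hf0 y))]
    exact mul_le_mul_of_nonneg_left hy (hK1n y)
  have hi2 : Integrable (fun y => f y * K2 y) := by
    have := hpq.ennrealOfReal
    exact hfp.integrable_mul hK2L
  have hsplit : (∫ y : EuclideanSpace ℝ (Fin 3), (Real.exp (-‖y‖) / (4 * Real.pi * ‖y‖)) * f y)
      = (∫ y, K1 y * f y) + ∫ y, f y * K2 y := by
    rw [← integral_add hi1 hi2]
    congr 1
    ext y
    by_cases h : ‖y‖ < R
    · have h' : ¬ R ≤ ‖y‖ := not_le.mpr h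
      simp [K1, K2, indicator, h, h', besselK]
    · have h' : R ≤ ‖y‖ := not_lt.mp h
      simp [K1, K2, indicator, h, h', besselK]
      ring
  rw [hsplit]
  have hb1 : ∫ y, K1 y * f y ≤ (1 - (R + 1) * Real.exp (-R)) * M := by
    rw [← near_integral hR0.le, ← integral_mul_const]
    refine integral_mono_ae hi1 (hK1i.mul_const M) ?_
    filter_upwards [hfM] with y hy
    exact mul_le_mul_of_nonneg_left hy (hK1n y)
  have hb2 := integral_mul_le_Lp_mul_Lq_of_nonneg hpq (Filter.Eventually.of_forall hf0)
    (Filter.Eventually.of_forall hK2n) hfp hK2L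
  have hnorm : (eLpNorm f (ENNReal.ofReal p) volume).toReal = (∫ a, f a ^ p) ^ (1 / p) := by
    rw [hfp.eLpNorm_eq_integral_rpow_norm (by simpa using hp0) (by simp),
      ENNReal.toReal_ofReal hp0.le, ENNReal.toReal_ofReal (by positivity)]
    simp_rw [Real.norm_of_nonneg (hf0 _)]
    rw [one_div]
  rw [← hnorm] at hb2
  have hb3 : (∫ a, K2 a ^ q) ^ (1 / q) ≤
      (16 * π * (4 * π) ^ (-q)) ^ (1 / q) * R ^ ((2 - q) / q) * Real.exp (-R) := by
    calc (∫ a, K2 a ^ q) ^ (1 / q)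
        ≤ ((16 * π * (4 * π) ^ (-q)) * (R ^ (2 - q) * Real.exp (-q * R))) ^ (1 / q) := by
          refine Real.rpow_le_rpow ?_ (far_integral hq hR) (by positivity)
          exact integral_nonneg fun y => Real.rpow_nonneg (hK2n y) q
      _ = _ := by
          generalize hA : 16 * π * (4 * π) ^ (-q) = A
          have hA0 : 0 ≤ A := by rw [← hA]; positivity
          rw [Real.mul_rpow hA0 (by positivity),
            Real.mul_rpow (x := R ^ (2 - q)) (by positivity) (by positivity),
            ← Real.rpow_mul hR0.le, ← Real.exp_mul,
            show (2 - q) * (1 / q) = (2 - q) / q by ring,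
            show -q * R * (1 / q) = -R by field_simp]
          ring
  have hN : 0 ≤ (eLpNorm f (ENNReal.ofReal p) volume).toReal := ENNReal.toReal_nonneg
  have hb4 := mul_le_mul_of_nonneg_left hb3 hN
  linarith
end

section
/- Let T > 0, B > 0, L > 0, c₁ > 0. Let b, c : ℝ × [0, T] → ℝ be continuous functions such that |b(x,t)| ≤ B and |b(x,t) − b(y,t)| ≤ L |x − y| for all x, y ∈ ℝ and t ∈ [0,T]. Let f : ℝ × [0, T] → ℝ be continuously differentiable and satisfy ∂_t f(x,t) + b(x,t) ∂_x f(x,t) + c(x,t) f(x,t) = 0 for all (x,t) ∈ ℝ × [0,T]. If f(x, 0) ≤ 0 for every x with |x| ≤ c₁, then f(x, t) ≤ 0 for every (x, t) ∈ ℝ × [0, T] with |x| + B t ≤ c₁. -/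
open Set

/-- finite speed of propagation for the sign of solutions of a
linear transport equation `∂ₜ f + b ∂ₓ f + c f = 0`. -/
theorem stmt_16 (T B L c₁ : ℝ) (hT : 0 < T) (hB : 0 < B) (hL : 0 < L) (hc₁ : 0 < c₁)
    (b c F : ℝ × ℝ → ℝ)
    (hb_cont : ContinuousOn b (Set.univ ×ˢ Set.Icc (0:ℝ) T))
    (hc_cont : ContinuousOn c (Set.univ ×ˢ Set.Icc (0:ℝ) T))
    (hb_bdd : ∀ x t : ℝ, t ∈ Set.Icc (0:ℝ) T → |b (x, t)| ≤ B)
    (hb_lip : ∀ x y t : ℝ, t ∈ Set.Icc (0:ℝ) T → |b (x, t) - b (y, t)| ≤ L * |x - y|)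
    (hF : ContDiffOn ℝ 1 F (Set.univ ×ˢ Set.Icc (0:ℝ) T))
    (hPDE : ∀ x t : ℝ, t ∈ Set.Icc (0:ℝ) T →
      fderivWithin ℝ F (Set.univ ×ˢ Set.Icc (0:ℝ) T) (x, t) (0, 1)
        + b (x, t) * fderivWithin ℝ F (Set.univ ×ˢ Set.Icc (0:ℝ) T) (x, t) (1, 0)
        + c (x, t) * F (x, t) = 0)
    (h0 : ∀ x : ℝ, |x| ≤ c₁ → F (x, 0) ≤ 0) :
    ∀ x t : ℝ, t ∈ Set.Icc (0:ℝ) T → |x| + B * t ≤ c₁ → F (x, t) ≤ 0 := by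
  intro x t ht hxt
  set S : Set (ℝ × ℝ) := Set.univ ×ˢ Set.Icc (0:ℝ) T with hS
  have hPL : IsPicardLindelof (fun s y => b (y, s)) (⟨t, ht⟩ : Icc (0:ℝ) T) x
      (⟨B * T, by positivity⟩ : NNReal) 0 ⟨B, hB.le⟩ ⟨L, hL.le⟩ := by
    refine ⟨?_, ?_, ?_, ?_⟩
    · intro s hs
      refine LipschitzOnWith.of_dist_le_mul ?_
      intro y _ w _
      simpa [Real.dist_eq] using! hb_lip y w s hs
    · intro y _
      exact hb_cont.comp (by fun_prop) (fun s hs => ⟨mem_univ _, hs⟩)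
    · intro s hs y _
      exact hb_bdd y s hs
    · change B * max (T - t) (t - 0) ≤ B * T - 0
      rw [sub_zero, sub_zero]
      refine mul_le_mul_of_nonneg_left (max_le ?_ ?_) hB.le
      · linarith [ht.1]
      · linarith [ht.2]
  obtain ⟨z, hzt, hz⟩ := hPL.exists_eq_forall_mem_Icc_hasDerivWithinAt₀
  have hzt : z t = x := hzt
  have h00 : (0:ℝ) ∈ Icc (0:ℝ) T := ⟨le_rfl, hT.le⟩
  have hzc : ContinuousOn z (Icc 0 T) := fun s hs => (hz s hs).continuousWithinAt
  -- speed bound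
  have hz0 : |z 0| ≤ c₁ := by
    have h1 := (convex_Icc (0:ℝ) T).norm_image_sub_le_of_norm_hasDerivWithin_le hz
      (fun s hs => hb_bdd (z s) s hs) ht h00
    rw [hzt] at h1
    simp only [Real.norm_eq_abs, zero_sub, abs_neg, abs_of_nonneg ht.1] at h1
    have h2 : |z 0| ≤ |z 0 - x| + |x| := by
      simpa using abs_add_le (z 0 - x) x
    linarith
  -- integrating factor
  have hcc : ContinuousOn (fun s => c (z s, s)) (Icc 0 T) :=
    hc_cont.comp (hzc.prodMk continuousOn_id) (fun s hs => ⟨mem_univ _, hs⟩)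
  let k : ℝ → ℝ := IccExtend hT.le ((Icc 0 T).domRestrict fun s => c (z s, s))
  have hk : Continuous k := hcc.domRestrict.Icc_extend'
  have hkeq : ∀ s ∈ Icc (0:ℝ) T, k s = c (z s, s) := by
    intro s hs
    simp [k, IccExtend_of_mem hT.le _ hs]
  let E : ℝ → ℝ := fun s => Real.exp (∫ u in (0:ℝ)..s, k u)
  have hE : ∀ s, HasDerivAt E (E s * k s) s := fun s =>
    (hk.integral_hasStrictDerivAt 0 s).hasDerivAt.exp
  have hg : ∀ s ∈ Icc (0:ℝ) T,
      HasDerivWithinAt (fun s => F (z s, s) * E s) 0 (Icc 0 T) s := by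
    intro s hs
    have hmem : (z s, s) ∈ S := ⟨mem_univ _, hs⟩
    have hFd := ((hF.differentiableOn one_ne_zero) _ hmem).hasFDerivWithinAt
    have hcurve : HasDerivWithinAt (fun s => (z s, s)) (b (z s, s), (1:ℝ)) (Icc 0 T) s :=
      (hz s hs).prodMk (hasDerivWithinAt_id s _)
    have h1 := HasFDerivWithinAt.comp_hasDerivWithinAt (f := fun s => (z s, s)) s hFd hcurve (fun u hu => ⟨mem_univ _, hu⟩)
    have h2 := h1.mul (hE s).hasDerivWithinAt
    refine h2.congr_deriv ?_
    have h3 : ((b (z s, s), (1:ℝ)) : ℝ × ℝ) = (0, 1) + b (z s, s) • (1, 0) := by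
      simp
    rw [h3, map_add, map_smul, smul_eq_mul, hkeq s hs]
    have h4 := hPDE (z s) s hs
    simp only [Function.comp]
    linear_combination E s * h4
  have h1 := (convex_Icc (0:ℝ) T).norm_image_sub_le_of_norm_hasDerivWithin_le hg
      (C := 0) (fun s hs => by simp) h00 ht
  have h2 : F (x, t) * E t = F (z 0, 0) * E 0 := by
    rw [zero_mul, norm_le_zero_iff, hzt] at h1
    linarith
  have h3 : F (z 0, 0) * E 0 ≤ 0 :=
    mul_nonpos_of_nonpos_of_nonneg (h0 _ hz0) (Real.exp_pos _).le
  by_contra! hpos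
  have := mul_pos hpos (Real.exp_pos (∫ u in (0:ℝ)..t, k u))
  have h4 : 0 < F (x, t) * E t := this
  linarith
end

section
/- Let g : (0, ∞) → ℝ be continuously differentiable with lim_{r→∞} g(r) = 0, ∫₀^∞ g(r)² r dr < ∞ and ∫₀^∞ g′(r)² r dr < ∞. Then for every R > 0, g(R)² ≤ (2/R) · ( ∫₀^∞ g(r)² r dr )^{1/2} · ( ∫₀^∞ g′(r)² r dr )^{1/2}. -/
open MeasureTheory Set Filter

/-- the two-dimensional radial decay estimate
`g(R)² ≤ (2/R) (∫ g² r dr)^{1/2} (∫ g'² r dr)^{1/2}`. -/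
theorem stmt_19 (g : ℝ → ℝ)
    (hg : ContDiffOn ℝ 1 g (Set.Ioi 0))
    (hlim : Filter.Tendsto g Filter.atTop (nhds 0))
    (hint1 : IntegrableOn (fun r => (g r)^2 * r) (Set.Ioi 0))
    (hint2 : IntegrableOn (fun r => (deriv g r)^2 * r) (Set.Ioi 0)) :
    ∀ R : ℝ, 0 < R →
      (g R)^2 ≤ (2 / R) * Real.sqrt (∫ r in Set.Ioi (0:ℝ), (g r)^2 * r)
                        * Real.sqrt (∫ r in Set.Ioi (0:ℝ), (deriv g r)^2 * r) := by
  intro R hR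
  have hsub : Ioi R ⊆ Ioi (0:ℝ) := Ioi_subset_Ioi hR.le
  have hder : ∀ x ∈ Ioi (0:ℝ), HasDerivAt g (deriv g x) x := fun x hx =>
    ((hg.differentiableOn one_ne_zero).differentiableAt (isOpen_Ioi.mem_nhds hx)).hasDerivAt
  have hdc : ContinuousOn (deriv g) (Ioi 0) :=
    hg.continuousOn_deriv_of_isOpen isOpen_Ioi le_rfl
  have hA0 : 0 ≤ ∫ r in Ioi (0:ℝ), (g r)^2 * r :=
    setIntegral_nonneg measurableSet_Ioi fun x hx => mul_nonneg (sq_nonneg _) (le_of_lt hx)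
  have hB0 : 0 ≤ ∫ r in Ioi (0:ℝ), (deriv g r)^2 * r :=
    setIntegral_nonneg measurableSet_Ioi fun x hx => mul_nonneg (sq_nonneg _) (le_of_lt hx)
  have hpt : ∀ t : ℝ, 0 < t → ∀ r ∈ Ioi R,
      ‖2 * g r * deriv g r‖ ≤ (t / R) * ((g r)^2 * r) + (1 / (t * R)) * ((deriv g r)^2 * r) := by
    intro t ht r hr
    have hr' : R < r := hr
    have e : (t / R) * ((g r)^2 * r) + (1 / (t * R)) * ((deriv g r)^2 * r)
        = (t * (g r)^2 + (deriv g r)^2 / t) * (r / R) := by field_simp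
    have h1 : 1 ≤ r / R := by rw [le_div_iff₀ hR]; linarith
    have h2 : ‖2 * g r * deriv g r‖ ≤ t * (g r)^2 + (deriv g r)^2 / t := by
      have e2 : t * (g r)^2 + (deriv g r)^2 / t = ((t * g r)^2 + (deriv g r)^2) / t := by
        field_simp
      rw [e2, le_div_iff₀ ht, Real.norm_eq_abs, abs_mul, abs_mul, abs_two,
        ← sq_abs (t * g r), ← sq_abs (deriv g r), abs_mul, abs_of_pos ht]
      nlinarith [sq_nonneg (t * |g r| - |deriv g r|)]
    rw [e]
    exact h2.trans (le_mul_of_one_le_right ((norm_nonneg _).trans h2) h1)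
  have hI : ∀ t : ℝ, IntegrableOn (fun r => (t / R) * ((g r)^2 * r)
      + (1 / (t * R)) * ((deriv g r)^2 * r)) (Ioi 0) := fun t =>
    (hint1.const_mul _).add (hint2.const_mul _)
  have hint : IntegrableOn (fun r => 2 * g r * deriv g r) (Ioi R) := by
    refine Integrable.mono' ((hI 1).mono_set hsub) ?_
      ((ae_restrict_iff' measurableSet_Ioi).2 (ae_of_all _ (hpt 1 one_pos)))
    exact (((continuousOn_const.mul hg.continuousOn).mul hdc).mono hsub).aestronglyMeasurable
      measurableSet_Ioi
  have hftc : ∫ r in Ioi R, 2 * g r * deriv g r = 0 - (g R)^2 := by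
    refine integral_Ioi_of_hasDerivAt_of_tendsto' (f := fun r => (g r)^2) ?_ hint ?_
    · intro x hx
      have := (hder x (lt_of_lt_of_le hR hx)).pow 2
      have h2 : HasDerivAt (fun r => (g r)^2) _ x := this
      refine h2.congr_deriv ?_
      simp
    · simpa using hlim.pow 2
  have key : ∀ t : ℝ, 0 < t → (g R)^2 ≤ (t / R) * (∫ r in Ioi (0:ℝ), (g r)^2 * r)
      + (1 / (t * R)) * ∫ r in Ioi (0:ℝ), (deriv g r)^2 * r := by
    intro t ht
    rw [← integral_const_mul, ← integral_const_mul,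
      ← integral_add (hint1.const_mul _) (hint2.const_mul _)]
    calc (g R)^2 = ‖∫ r in Ioi R, 2 * g r * deriv g r‖ := by
          rw [hftc]; simp
      _ ≤ ∫ r in Ioi R, ((t / R) * ((g r)^2 * r) + (1 / (t * R)) * ((deriv g r)^2 * r)) :=
          norm_integral_le_of_norm_le ((hI t).mono_set hsub)
            ((ae_restrict_iff' measurableSet_Ioi).2 (ae_of_all _ (hpt t ht)))
      _ ≤ _ := by
          refine setIntegral_mono_set (hI t) ?_ (ae_of_all _ hsub)
          refine (ae_restrict_iff' measurableSet_Ioi).2 (ae_of_all _ fun x hx => ?_)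
          have : (0:ℝ) < x := hx
          simp only [Pi.zero_apply]
          positivity
  generalize (∫ r in Ioi (0:ℝ), (g r)^2 * r) = A at *
  generalize (∫ r in Ioi (0:ℝ), (deriv g r)^2 * r) = B at *
  obtain ⟨a, ha, hAa⟩ : ∃ a, 0 ≤ a ∧ A = a^2 := ⟨√A, Real.sqrt_nonneg _, (Real.sq_sqrt hA0).symm⟩
  obtain ⟨b, hb, hBb⟩ : ∃ b, 0 ≤ b ∧ B = b^2 := ⟨√B, Real.sqrt_nonneg _, (Real.sq_sqrt hB0).symm⟩
  subst hAa hBb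
  rw [Real.sqrt_sq ha, Real.sqrt_sq hb]
  have h : ∀ ε : ℝ, 0 < ε → R * (g R)^2 ≤ 2 * a * b + ε * (a + b) := by
    intro ε hε
    have h1 := key ((b + ε) / (a + ε)) (by positivity)
    have h2 : R * (g R)^2 ≤ (b + ε) * (a^2 / (a + ε)) + (a + ε) * (b^2 / (b + ε)) := by
      refine (mul_le_mul_of_nonneg_left h1 hR.le).trans (le_of_eq ?_)
      field_simp
    have h3 : a^2 / (a + ε) ≤ a := by rw [div_le_iff₀ (by positivity)]; nlinarith
    have h4 : b^2 / (b + ε) ≤ b := by rw [div_le_iff₀ (by positivity)]; nlinarith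
    have h5 := mul_le_mul_of_nonneg_left h3 (show 0 ≤ b + ε by positivity)
    have h6 := mul_le_mul_of_nonneg_left h4 (show 0 ≤ a + ε by positivity)
    linarith
  have hfin : R * (g R)^2 ≤ 2 * a * b := by
    refine le_of_forall_pos_le_add fun δ hδ => ?_
    refine (h (δ / (a + b + 1)) (by positivity)).trans ?_
    have : δ / (a + b + 1) * (a + b) ≤ δ := by
      rw [div_mul_eq_mul_div, div_le_iff₀ (by positivity)]; nlinarith
    linarith
  have e : 2 / R * a * b = 2 * a * b / R := by ring
  rw [e, le_div_iff₀ hR]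
  linarith
end
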